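/- arXiv:2602.06029 — 2 statements merged into one kernel-verified Lean document; each statement's English description precedes it below -/
import Mathlib

section
/- Let T ∈ ℕ, a > 0, c ≥ 0, β̄ > 0, ρ ≥ 0, and let (v_t), (r_t), (B_t), (β_t) for t = 1, …, T be real sequences with v_t ∈ [0, 1], r_t ≥ 0, B_t ≥ 0, 0 < β_t ≤ β̄. Define I_t := (1/2)·log(1 + a·v_t) and assume ∑_{t=1}^{T} I_t ≤ ρ and, for each t, r_t ≤ β_t·I_t + c·√(v_t) + B_t. Then ∑_{t=1}^{T} r_t ≤ β̄·ρ + c·√(C·T·ρ) + ∑_{t=1}^{T} B_t, where C := 2/log(1 + a). (The deterministic summation core of Theorem 2: the cumulative regret bound R_T ≤ β̄_T·ρ_T + L(ζ_T^{1/2} + √(2/π))·√(C·T·ρ_T) + ∑ B_t.) -/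
open Real Finset

/-!
Since `log` is concave, a predictive variance `x ∈ [0, 1]` is at most `2 / log (1 + a)` times its
information gain, so the variances sum to at most `2 / log (1 + a) * ρ`. Cauchy–Schwarz then
controls the sum of the standard deviations, and the curiosity terms are bounded by `βbar * ρ`.
-/

/-- The information gain of one observation at a point whose Gaussian-process predictive variance
is `x`, where `a` is the inverse variance of the observation noise. -/
noncomputable def infoGain (a x : ℝ) : ℝ :=
  (1 / 2) * log (1 + a * x)

lemma infoGain_nonneg {a x : ℝ} (hax : 0 ≤ a * x) : 0 ≤ infoGain a x :=
  mul_nonneg one_half_pos.le (log_nonneg (le_add_of_nonneg_right hax))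

lemma mul_log_one_add_le_log_one_add_mul {a x : ℝ} (ha : -1 < a) (hx0 : 0 ≤ x) (hx1 : x ≤ 1) :
    x * log (1 + a) ≤ log (1 + a * x) := by
  have hpos : 0 < 1 + a := by linarith
  calc x * log (1 + a) = log ((1 + a) ^ x) := (log_rpow hpos x).symm
    _ ≤ log (1 + x * a) :=
        log_le_log (rpow_pos_of_pos hpos x) (rpow_one_add_le_one_add_mul_self ha.le hx0 hx1)
    _ = log (1 + a * x) := by rw [mul_comm x a]

lemma le_two_div_log_mul_infoGain {a x : ℝ} (ha : 0 < a) (hx0 : 0 ≤ x) (hx1 : x ≤ 1) :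
    x ≤ 2 / log (1 + a) * infoGain a x := by
  have hlog : 0 < log (1 + a) := log_pos (lt_add_of_pos_right 1 ha)
  calc x ≤ log (1 + a * x) / log (1 + a) :=
        (le_div_iff₀ hlog).2 (mul_log_one_add_le_log_one_add_mul (by linarith) hx0 hx1)
    _ = 2 / log (1 + a) * infoGain a x := by
        rw [infoGain]
        ring

section Sums

variable {ι : Type*} (s : Finset ι)

lemma sum_mul_le_mul_of_sum_le {R : Type*} [Semiring R] [PartialOrder R] [IsOrderedRing R]
    {f g : ι → R} {b M : R} (hb : 0 ≤ b) (hf : ∀ i ∈ s, f i ≤ b) (hg : ∀ i ∈ s, 0 ≤ g i)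
    (hsum : ∑ i ∈ s, g i ≤ M) : ∑ i ∈ s, f i * g i ≤ b * M :=
  calc ∑ i ∈ s, f i * g i ≤ ∑ i ∈ s, b * g i :=
        sum_le_sum fun i hi => mul_le_mul_of_nonneg_right (hf i hi) (hg i hi)
    _ = b * ∑ i ∈ s, g i := (mul_sum ..).symm
    _ ≤ b * M := mul_le_mul_of_nonneg_left hsum hb

variable {v : ι → ℝ}

lemma sum_sqrt_le_sqrt_card_mul_sum (hv : ∀ i ∈ s, 0 ≤ v i) :
    ∑ i ∈ s, √(v i) ≤ √(#s * ∑ i ∈ s, v i) := by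
  apply le_sqrt_of_sq_le
  calc (∑ i ∈ s, √(v i)) ^ 2 ≤ #s * ∑ i ∈ s, √(v i) ^ 2 := sq_sum_le_card_mul_sum_sq
    _ = #s * ∑ i ∈ s, v i := by rw [sum_congr rfl fun i hi => sq_sqrt (hv i hi)]

variable {a ρ : ℝ}

lemma sum_le_two_div_log_mul_of_sum_infoGain_le (ha : 0 < a) (hv0 : ∀ i ∈ s, 0 ≤ v i)
    (hv1 : ∀ i ∈ s, v i ≤ 1) (hinfo : ∑ i ∈ s, infoGain a (v i) ≤ ρ) :
    ∑ i ∈ s, v i ≤ 2 / log (1 + a) * ρ := by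
  have hlog : 0 < log (1 + a) := log_pos (lt_add_of_pos_right 1 ha)
  calc ∑ i ∈ s, v i ≤ ∑ i ∈ s, 2 / log (1 + a) * infoGain a (v i) :=
        sum_le_sum fun i hi => le_two_div_log_mul_infoGain ha (hv0 i hi) (hv1 i hi)
    _ = 2 / log (1 + a) * ∑ i ∈ s, infoGain a (v i) := (mul_sum ..).symm
    _ ≤ 2 / log (1 + a) * ρ := by gcongr

lemma sum_sqrt_le_of_sum_infoGain_le (ha : 0 < a) (hv0 : ∀ i ∈ s, 0 ≤ v i)
    (hv1 : ∀ i ∈ s, v i ≤ 1) (hinfo : ∑ i ∈ s, infoGain a (v i) ≤ ρ) :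
    ∑ i ∈ s, √(v i) ≤ √(2 / log (1 + a) * #s * ρ) :=
  calc ∑ i ∈ s, √(v i) ≤ √(#s * ∑ i ∈ s, v i) := sum_sqrt_le_sqrt_card_mul_sum s hv0
    _ ≤ √(#s * (2 / log (1 + a) * ρ)) := by
        gcongr
        exact sum_le_two_div_log_mul_of_sum_infoGain_le s ha hv0 hv1 hinfo
    _ = √(2 / log (1 + a) * #s * ρ) := by
        congr 1
        ring

theorem aif_cumulative_regret_core_general {c βbar : ℝ} {r B β : ι → ℝ} (ha : 0 < a)
    (hc : 0 ≤ c) (hβbar : 0 ≤ βbar) (hv0 : ∀ i ∈ s, 0 ≤ v i) (hv1 : ∀ i ∈ s, v i ≤ 1)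
    (hβle : ∀ i ∈ s, β i ≤ βbar) (hinfo : ∑ i ∈ s, infoGain a (v i) ≤ ρ)
    (hstep : ∀ i ∈ s, r i ≤ β i * infoGain a (v i) + c * √(v i) + B i) :
    ∑ i ∈ s, r i ≤ βbar * ρ + c * √(2 / log (1 + a) * #s * ρ) + ∑ i ∈ s, B i := by
  have hcuriosity : ∑ i ∈ s, β i * infoGain a (v i) ≤ βbar * ρ :=
    sum_mul_le_mul_of_sum_le s hβbar hβle
      (fun i hi => infoGain_nonneg (mul_nonneg ha.le (hv0 i hi))) hinfo
  have hdeviation : ∑ i ∈ s, √(v i) ≤ √(2 / log (1 + a) * #s * ρ) :=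
    sum_sqrt_le_of_sum_infoGain_le s ha hv0 hv1 hinfo
  calc ∑ i ∈ s, r i ≤ ∑ i ∈ s, (β i * infoGain a (v i) + c * √(v i) + B i) := sum_le_sum hstep
    _ = ∑ i ∈ s, β i * infoGain a (v i) + c * ∑ i ∈ s, √(v i) + ∑ i ∈ s, B i := by
        rw [sum_add_distrib, sum_add_distrib, mul_sum]
    _ ≤ βbar * ρ + c * √(2 / log (1 + a) * #s * ρ) + ∑ i ∈ s, B i := by gcongr

end Sums

/-- Deterministic summation core of Theorem 2 (cumulative regret bound):
`∑ r_t ≤ β̄·ρ + c·√(C·T·ρ) + ∑ B_t` with `C = 2/log(1 + a)`,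
where `I_t = (1/2)·log(1 + a·v_t)`. Sequences are indexed by
`t ∈ {1, …, T}`. -/
theorem aif_cumulative_regret_core
    (T : ℕ) (a c βbar ρ : ℝ) (v r B β : ℕ → ℝ)
    (ha : 0 < a) (hc : 0 ≤ c) (hβbar : 0 < βbar) (hρ : 0 ≤ ρ)
    (hv0 : ∀ t ∈ Finset.Icc 1 T, 0 ≤ v t)
    (hv1 : ∀ t ∈ Finset.Icc 1 T, v t ≤ 1)
    (hr : ∀ t ∈ Finset.Icc 1 T, 0 ≤ r t)
    (hB : ∀ t ∈ Finset.Icc 1 T, 0 ≤ B t)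
    (hβpos : ∀ t ∈ Finset.Icc 1 T, 0 < β t)
    (hβle : ∀ t ∈ Finset.Icc 1 T, β t ≤ βbar)
    (hinfo : ∑ t ∈ Finset.Icc 1 T, (1 / 2) * Real.log (1 + a * v t) ≤ ρ)
    (hstep : ∀ t ∈ Finset.Icc 1 T,
      r t ≤ β t * ((1 / 2) * Real.log (1 + a * v t)) + c * Real.sqrt (v t) + B t) :
    ∑ t ∈ Finset.Icc 1 T, r t ≤
      βbar * ρ + c * Real.sqrt ((2 / Real.log (1 + a)) * T * ρ) +
        ∑ t ∈ Finset.Icc 1 T, B t := by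
  simpa only [Nat.card_Icc, Nat.add_sub_cancel] using
    aif_cumulative_regret_core_general (Icc 1 T) ha hc hβbar.le hv0 hv1 hβle hinfo hstep
end

section
/- Let σ > 0, μ ∈ ℝ, ζ ≥ 0, L ≥ 0, B ≥ 0, K ∈ ℝ. Let r : ℝ → ℝ be Lipschitz continuous with constant L and nonnegative, let h : ℝ → ℝ be integrable against N(μ, σ²) with |r(y) − h(y)| ≤ B for all y ∈ ℝ, and let f ∈ ℝ satisfy |f − μ| ≤ ζ^{1/2}·σ. If ∫ h dN(μ, σ²) ≤ K, then r(f) ≤ K + L·(ζ^{1/2} + √(2/π))·σ + B. (The instant-regret bound of Lemma B.4, with K playing the role of β_t times the mutual information bound ensured by sufficient curiosity.) -/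
open MeasureTheory ProbabilityTheory Real

/-!
Lipschitz continuity and alignment give `r f ≤ h y + B + L |f - y|` for every `y`. Averaging over
`y ∼ N(μ, σ²)` leaves the expected distance `E|f - y| ≤ |f - μ| + E|y - μ|`, and the mean absolute
deviation of the Gaussian is `σ √(2/π)`.
-/

open scoped NNReal

section LipschitzAveraging

variable {X : Type*} [PseudoMetricSpace X] [MeasurableSpace X] {ν : Measure X}
  [IsProbabilityMeasure ν]

theorem integral_dist_le_dist_add_integral_dist {x m : X} (hx : Integrable (dist x) ν)
    (hm : Integrable (dist m) ν) : ∫ y, dist x y ∂ν ≤ dist x m + ∫ y, dist m y ∂ν :=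
  calc ∫ y, dist x y ∂ν
      ≤ ∫ y, (dist x m + dist m y) ∂ν :=
        integral_mono hx ((integrable_const _).add hm) (dist_triangle x m)
    _ = dist x m + ∫ y, dist m y ∂ν := by
        rw [integral_add (integrable_const _) hm, integral_const, probReal_univ, one_smul]

theorem lipschitzWith_apply_le_integral_add {r h : X → ℝ} {L : ℝ≥0} {B : ℝ} {x : X}
    (hr : LipschitzWith L r) (hh : Integrable h ν) (hx : Integrable (dist x) ν)
    (hrh : ∀ᵐ y ∂ν, r y ≤ h y + B) : r x ≤ ∫ y, h y ∂ν + L * ∫ y, dist x y ∂ν + B := by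
  have hpointwise : ∀ᵐ y ∂ν, r x - B ≤ h y + L * dist x y := by
    filter_upwards [hrh] with y hy
    linarith [hr.le_add_mul x y]
  have haverage : r x - B ≤ ∫ y, h y ∂ν + L * ∫ y, dist x y ∂ν :=
    calc r x - B
        = ∫ _, (r x - B) ∂ν := by rw [integral_const, probReal_univ, one_smul]
      _ ≤ ∫ y, (h y + L * dist x y) ∂ν :=
          integral_mono_ae (integrable_const _) (hh.add (hx.const_mul _)) hpointwise
      _ = ∫ y, h y ∂ν + L * ∫ y, dist x y ∂ν := by
          rw [integral_add hh (hx.const_mul _), integral_const_mul]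
  linarith

end LipschitzAveraging

section GaussianAbsoluteMoments

theorem integral_abs_rpow_mul_exp_neg_mul_abs_rpow {p q b : ℝ} (hp : 0 < p) (hq : -1 < q)
    (hb : 0 < b) :
    ∫ x : ℝ, |x| ^ q * rexp (-b * |x| ^ p) =
      2 / p * b ^ (-(q + 1) / p) * Gamma ((q + 1) / p) := by
  rw [integral_comp_abs (f := fun x ↦ x ^ q * rexp (-b * x ^ p)),
    integral_rpow_mul_exp_neg_mul_rpow hp hq hb]
  ring

theorem integral_abs_sub_rpow_gaussianReal (μ : ℝ) {v : ℝ≥0} (hv : v ≠ 0) {q : ℝ} (hq : -1 < q) :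
    ∫ x, |x - μ| ^ q ∂gaussianReal μ v = (2 * v) ^ (q / 2) * Gamma ((q + 1) / 2) / √π := by
  have hv_pos : (0 : ℝ) < 2 * v := by positivity
  have hdensity (x : ℝ) : gaussianPDFReal μ v x • |x - μ| ^ q =
      (√(2 * π * v))⁻¹ * (|x - μ| ^ q * rexp (-(2 * (v : ℝ))⁻¹ * |x - μ| ^ (2 : ℝ))) := by
    rw [gaussianPDFReal, smul_eq_mul, rpow_two, sq_abs, neg_div, div_eq_inv_mul, neg_mul]
    ring
  have hnormalization :
      (√(2 * π * v))⁻¹ * ((2 * v : ℝ)⁻¹) ^ (-(q + 1) / 2) = (2 * v) ^ (q / 2) / √π := by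
    rw [mul_right_comm, sqrt_mul hv_pos.le, inv_rpow hv_pos.le, ← rpow_neg hv_pos.le,
      show -(-(q + 1) / 2) = q / 2 + 1 / 2 by ring, rpow_add hv_pos, ← sqrt_eq_rpow]
    field_simp
  calc ∫ x, |x - μ| ^ q ∂gaussianReal μ v
      = (√(2 * π * v))⁻¹ *
          ∫ x, |x - μ| ^ q * rexp (-(2 * (v : ℝ))⁻¹ * |x - μ| ^ (2 : ℝ)) := by
        simp_rw [integral_gaussianReal_eq_integral_smul hv, hdensity, integral_const_mul]
    _ = (√(2 * π * v))⁻¹ * ∫ x : ℝ, |x| ^ q * rexp (-(2 * (v : ℝ))⁻¹ * |x| ^ (2 : ℝ)) := by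
        rw [integral_sub_right_eq_self
          (fun x : ℝ ↦ |x| ^ q * rexp (-(2 * (v : ℝ))⁻¹ * |x| ^ (2 : ℝ))) μ]
    _ = (√(2 * π * v))⁻¹ * (2 * v : ℝ)⁻¹ ^ (-(q + 1) / 2) * Gamma ((q + 1) / 2) := by
        rw [integral_abs_rpow_mul_exp_neg_mul_abs_rpow two_pos hq (inv_pos.mpr hv_pos)]
        ring
    _ = (2 * v) ^ (q / 2) * Gamma ((q + 1) / 2) / √π := by
        rw [hnormalization, div_mul_eq_mul_div]

theorem integral_abs_sub_gaussianReal (μ : ℝ) (v : ℝ≥0) :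
    ∫ x, |x - μ| ∂gaussianReal μ v = √(2 * v / π) := by
  rcases eq_or_ne v 0 with rfl | hv
  · simp
  · have hmoment := integral_abs_sub_rpow_gaussianReal μ hv (q := 1) (by norm_num)
    simpa only [rpow_one, one_add_one_eq_two, div_self (two_ne_zero' ℝ), Gamma_one, mul_one,
      ← sqrt_eq_rpow, ← sqrt_div' _ pi_pos.le] using hmoment

theorem integrable_dist_gaussianReal (x μ : ℝ) (v : ℝ≥0) :
    Integrable (dist x) (gaussianReal μ v) :=
  ((integrable_const x).sub ((memLp_id_gaussianReal 1).integrable le_rfl)).abs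

theorem integral_dist_gaussianReal_le (x μ : ℝ) (v : ℝ≥0) :
    ∫ y, dist x y ∂gaussianReal μ v ≤ |x - μ| + √(2 * v / π) := by
  have htriangle := integral_dist_le_dist_add_integral_dist
    (integrable_dist_gaussianReal x μ v) (integrable_dist_gaussianReal μ μ v)
  simpa only [dist_comm μ, Real.dist_eq _ μ, integral_abs_sub_gaussianReal] using htriangle

end GaussianAbsoluteMoments

theorem instant_regret_bound_general {μ c B K f : ℝ} {σ L : ℝ≥0} {r h : ℝ → ℝ}
    (hLip : LipschitzWith L r) (hint : Integrable h (gaussianReal μ (σ ^ 2)))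
    (halign : ∀ᵐ y ∂gaussianReal μ (σ ^ 2), r y ≤ h y + B) (hf : |f - μ| ≤ c * σ)
    (hK : ∫ y, h y ∂gaussianReal μ (σ ^ 2) ≤ K) :
    r f ≤ K + L * (c + √(2 / π)) * σ + B := by
  have hdeviation : √(2 * (σ ^ 2 : ℝ≥0) / π) = √(2 / π) * σ := by
    rw [NNReal.coe_pow, mul_div_right_comm, sqrt_mul (by positivity), sqrt_sq σ.coe_nonneg]
  calc r f
      ≤ ∫ y, h y ∂gaussianReal μ (σ ^ 2) + L * ∫ y, dist f y ∂gaussianReal μ (σ ^ 2) + B :=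
        lipschitzWith_apply_le_integral_add hLip hint (integrable_dist_gaussianReal f μ _) halign
    _ ≤ K + L * (c * σ + √(2 / π) * σ) + B := by
        gcongr
        exact (integral_dist_gaussianReal_le f μ _).trans (add_le_add hf hdeviation.le)
    _ = K + L * (c + √(2 / π)) * σ + B := by ring

/-- Instant-regret bound of Lemma B.4: if `r` is `L`-Lipschitz and
nonnegative, `h` is integrable with `|r − h| ≤ B`, `|f − μ| ≤ √ζ·σ`, and
`∫ h dN(μ, σ²) ≤ K`, then `r(f) ≤ K + L·(√ζ + √(2/π))·σ + B`. -/
theorem instant_regret_bound (σ μ ζ L B K f : ℝ) (r h : ℝ → ℝ)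
    (hσ : 0 < σ) (hζ : 0 ≤ ζ) (hL : 0 ≤ L) (hB : 0 ≤ B)
    (hLip : ∀ y₁ y₂ : ℝ, |r y₁ - r y₂| ≤ L * |y₁ - y₂|)
    (hrpos : ∀ y, 0 ≤ r y)
    (hint : Integrable h (gaussianReal μ (Real.toNNReal (σ ^ 2))))
    (halign : ∀ y : ℝ, |r y - h y| ≤ B)
    (hf : |f - μ| ≤ ζ ^ ((1 : ℝ) / 2) * σ)
    (hK : ∫ y, h y ∂(gaussianReal μ (Real.toNNReal (σ ^ 2))) ≤ K) :
    r f ≤ K + L * (ζ ^ ((1 : ℝ) / 2) + Real.sqrt (2 / π)) * σ + B := by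
  lift σ to ℝ≥0 using hσ.le
  lift L to ℝ≥0 using hL
  rw [← NNReal.coe_pow, toNNReal_coe] at hint hK
  exact instant_regret_bound_general (.of_dist_le_mul hLip) hint
    (.of_forall fun y ↦ sub_le_iff_le_add'.mp (abs_le.mp (halign y)).2) hf hK
end
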